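/- (Spectral gap / derivative-form Efron–Stein inequality.) Let X : ℝ^E → ℝ be continuously differentiable. Then Var_ℙ(X) ≤ ( Σ_{e∈E} E_ℙ[ sup_{t∈[α,β]} |∂X/∂x_e (ω[e↦t])|² ] ) · σ²(ν), where Var_ℙ(X) is the variance of X under ℙ and the expectation E_ℙ is over ω distributed according to ℙ. -/

import Mathlib

open MeasureTheory

def BM {Ω : Type*} [MeasurableSpace Ω] (f : Ω → ℝ) : Prop :=
  Measurable f ∧ ∃ C, ∀ x, |f x| ≤ C

section
variable {Ω Ω' : Type*} [MeasurableSpace Ω] [MeasurableSpace Ω']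

lemma MeasureTheory.Integrable.hfsub {f g : Ω → ℝ} {μ : Measure Ω} (hf : Integrable f μ)
    (hg : Integrable g μ) : Integrable (fun x => f x - g x) μ := hf.sub hg

lemma BM.integrable {f : Ω → ℝ} (h : BM f) (μ : Measure Ω) [IsProbabilityMeasure μ] :
    Integrable f μ := by
  obtain ⟨hm, C, hC⟩ := h
  exact Integrable.of_bound hm.aestronglyMeasurable C (Filter.Eventually.of_forall hC)

lemma BM.mul {f g : Ω → ℝ} (hf : BM f) (hg : BM g) : BM (fun x => f x * g x) := by
  obtain ⟨hm, C, hC⟩ := hf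
  obtain ⟨hm', C', hC'⟩ := hg
  refine ⟨hm.mul hm', C * C', fun x => ?_⟩
  rw [abs_mul]
  exact mul_le_mul (hC x) (hC' x) (abs_nonneg _) ((abs_nonneg _).trans (hC x))

lemma BM.sub {f g : Ω → ℝ} (hf : BM f) (hg : BM g) : BM (fun x => f x - g x) := by
  obtain ⟨hm, C, hC⟩ := hf
  obtain ⟨hm', C', hC'⟩ := hg
  refine ⟨hm.sub hm', C + C', fun x => ?_⟩
  exact (abs_sub _ _).trans (add_le_add (hC x) (hC' x))

lemma BM.sq {f : Ω → ℝ} (hf : BM f) : BM (fun x => f x ^ 2) := by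
  simpa [pow_two] using hf.mul hf

lemma BM.comp {f : Ω → ℝ} (hf : BM f) {g : Ω' → Ω} (hg : Measurable g) :
    BM (fun x => f (g x)) :=
  ⟨hf.1.comp hg, hf.2.imp fun _ h _ => h _⟩

lemma BM.int {f : Ω × Ω' → ℝ} (hf : BM f) (μ : Measure Ω') [IsProbabilityMeasure μ] :
    BM (fun x => ∫ y, f (x, y) ∂μ) := by
  refine ⟨(hf.1.stronglyMeasurable.integral_prod_right' (ν := μ)).measurable, ?_⟩
  obtain ⟨C, hC⟩ := hf.2
  refine ⟨C, fun x => ?_⟩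
  have := norm_integral_le_of_norm_le_const (μ := μ) (f := fun y => f (x, y)) (C := C)
    (Filter.Eventually.of_forall fun y => hC _)
  simpa using this

/-- Variance functional. -/
noncomputable def VV (μ : Measure Ω) (f : Ω → ℝ) : ℝ := ∫ x, f x ^ 2 ∂μ - (∫ x, f x ∂μ) ^ 2

lemma BM.var {f : Ω × Ω' → ℝ} (hf : BM f) (μ : Measure Ω') [IsProbabilityMeasure μ] :
    BM (fun x => VV μ fun y => f (x, y)) :=
  (hf.sq.int μ).sub ((hf.int μ).sq)

lemma VV_eq (μ : Measure Ω) [IsProbabilityMeasure μ] {f : Ω → ℝ} (hf : Integrable f μ)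
    (hf2 : Integrable (fun x => f x ^ 2) μ) (c : ℝ) :
    VV μ f = ∫ x, (f x - c) ^ 2 ∂μ - (∫ x, f x ∂μ - c) ^ 2 := by
  have h : ∫ x, (f x - c) ^ 2 ∂μ = ∫ x, f x ^ 2 ∂μ - 2 * c * ∫ x, f x ∂μ + c ^ 2 := by
    have : (fun x => (f x - c) ^ 2) = fun x => f x ^ 2 - 2 * c * f x + c ^ 2 := by
      ext x; ring
    rw [this, integral_add (hf2.hfsub (hf.const_mul _)) (integrable_const _),
      integral_sub hf2 (hf.const_mul _), integral_const_mul]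
    simp
  rw [h, VV]; ring

lemma two_factor (μ : Measure Ω) (ρ : Measure Ω') [IsProbabilityMeasure μ]
    [IsProbabilityMeasure ρ] {f : Ω × Ω' → ℝ} (hf : BM f) :
    VV (μ.prod ρ) f ≤ ∫ b, VV μ (fun a => f (a, b)) ∂ρ + ∫ a, VV ρ (fun b => f (a, b)) ∂μ := by
  have hfs : BM (fun p : Ω' × Ω => f (p.2, p.1)) := hf.comp measurable_swap
  have hg := hf.int ρ
  have hh := hfs.int μ
  set g := fun a => ∫ b, f (a, b) ∂ρ with hgd
  set h := fun b => ∫ a, f (a, b) ∂μ with hhd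
  set m := ∫ p, f p ∂(μ.prod ρ) with hm
  have mg : ∫ a, g a ∂μ = m := (integral_prod _ (hf.integrable _)).symm
  have mh : ∫ b, h b ∂ρ = m := (integral_prod_symm _ (hf.integrable _)).symm
  have hg' : BM (fun p : Ω × Ω' => g p.1) := hg.comp measurable_fst
  have hh' : BM (fun p : Ω × Ω' => h p.2) := hh.comp measurable_snd
  have e1 : ∫ b, VV μ (fun a => f (a, b)) ∂ρ = ∫ p, f p ^ 2 ∂(μ.prod ρ) - ∫ b, h b ^ 2 ∂ρ := by
    rw [integral_prod_symm _ (hf.sq.integrable _),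
      ← integral_sub ((hfs.sq.int μ).integrable _) (hh.sq.integrable _)]
    rfl
  have e2 : ∫ a, VV ρ (fun b => f (a, b)) ∂μ = ∫ p, f p ^ 2 ∂(μ.prod ρ) - ∫ a, g a ^ 2 ∂μ := by
    rw [integral_prod _ (hf.sq.integrable _),
      ← integral_sub ((hf.sq.int ρ).integrable _) (hg.sq.integrable _)]
    rfl
  have key : 0 ≤ ∫ p, (f p - g p.1 - h p.2 + m) ^ 2 ∂(μ.prod ρ) :=
    integral_nonneg fun _ => sq_nonneg _
  have expand : ∫ p, (f p - g p.1 - h p.2 + m) ^ 2 ∂(μ.prod ρ) =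
      ∫ p, f p ^ 2 ∂(μ.prod ρ) + ∫ p, g p.1 ^ 2 ∂(μ.prod ρ) + ∫ p, h p.2 ^ 2 ∂(μ.prod ρ) + m ^ 2
      - 2 * ∫ p, f p * g p.1 ∂(μ.prod ρ) - 2 * ∫ p, f p * h p.2 ∂(μ.prod ρ)
      + 2 * ∫ p, g p.1 * h p.2 ∂(μ.prod ρ) + 2 * m * ∫ p, f p ∂(μ.prod ρ)
      - 2 * m * ∫ p, g p.1 ∂(μ.prod ρ) - 2 * m * ∫ p, h p.2 ∂(μ.prod ρ) := by
    have i1 := hf.sq.integrable (μ.prod ρ)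
    have i2 := hg'.sq.integrable (μ.prod ρ)
    have i3 := hh'.sq.integrable (μ.prod ρ)
    have i4 := ((hf.mul hg').integrable (μ.prod ρ)).const_mul 2
    have i5 := ((hf.mul hh').integrable (μ.prod ρ)).const_mul 2
    have i6 := ((hg'.mul hh').integrable (μ.prod ρ)).const_mul 2
    have i7 := (hf.integrable (μ.prod ρ)).const_mul (2 * m)
    have i8 := (hg'.integrable (μ.prod ρ)).const_mul (2 * m)
    have i9 := (hh'.integrable (μ.prod ρ)).const_mul (2 * m)
    have i0 : Integrable (fun _ => m ^ 2) (μ.prod ρ) := integrable_const _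
    simp only [← integral_const_mul]
    rw [← integral_add i1 i2, ← integral_add (i1.fun_add i2) i3]
    have c : m ^ 2 = ∫ _, m ^ 2 ∂(μ.prod ρ) := by simp
    rw [c]
    rw [← integral_add ((i1.fun_add i2).fun_add i3) i0,
      ← integral_sub (((i1.fun_add i2).fun_add i3).fun_add i0) i4,
      ← integral_sub ((((i1.fun_add i2).fun_add i3).fun_add i0).hfsub i4) i5,
      ← integral_add (((((i1.fun_add i2).fun_add i3).fun_add i0).hfsub i4).hfsub i5) i6,
      ← integral_add ((((((i1.fun_add i2).fun_add i3).fun_add i0).hfsub i4).hfsub i5).fun_add i6) i7,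
      ← integral_sub (((((((i1.fun_add i2).fun_add i3).fun_add i0).hfsub i4).hfsub i5).fun_add i6).fun_add i7) i8,
      ← integral_sub ((((((((i1.fun_add i2).fun_add i3).fun_add i0).hfsub i4).hfsub i5).fun_add i6).fun_add i7).hfsub i8) i9]
    congr 1
    ext p
    ring
  have a1 : ∫ p, g p.1 ^ 2 ∂(μ.prod ρ) = ∫ a, g a ^ 2 ∂μ := by
    rw [integral_prod _ (hg'.sq.integrable _)]; simp
  have a2 : ∫ p, h p.2 ^ 2 ∂(μ.prod ρ) = ∫ b, h b ^ 2 ∂ρ := by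
    rw [integral_prod _ (hh'.sq.integrable _)]; simp
  have a3 : ∫ p, f p * g p.1 ∂(μ.prod ρ) = ∫ a, g a ^ 2 ∂μ := by
    rw [integral_prod _ ((hf.mul hg').integrable _)]
    simp only [integral_mul_const, pow_two, hgd]
  have a4 : ∫ p, f p * h p.2 ∂(μ.prod ρ) = ∫ b, h b ^ 2 ∂ρ := by
    rw [integral_prod_symm _ ((hf.mul hh').integrable _)]
    simp only [integral_mul_const, pow_two, hhd]
  have a5 : ∫ p, g p.1 * h p.2 ∂(μ.prod ρ) = m * m := by
    rw [integral_prod_mul, mg, mh]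
  have a6 : ∫ p, g p.1 ∂(μ.prod ρ) = m := by
    rw [integral_prod _ (hg'.integrable _)]; simpa using mg
  have a7 : ∫ p, h p.2 ∂(μ.prod ρ) = m := by
    rw [integral_prod _ (hh'.integrable _)]; simpa using mh
  rw [expand, a1, a2, a3, a4, a5, a6, a7, ← hm] at key
  rw [e1, e2, VV, ← hm]
  nlinarith [key]
end

lemma BM.upd {E : Type*} [DecidableEq E] [Fintype E] {f : (E → ℝ) → ℝ} (hf : BM f) (ν : Measure ℝ)
    [IsProbabilityMeasure ν] (e : E) : BM (fun ω => VV ν fun t => f (Function.update ω e t)) := by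
  have : Measurable (fun p : (E → ℝ) × ℝ => Function.update p.1 e p.2) := by
    rw [measurable_pi_iff]
    intro a
    by_cases h : a = e
    · subst h; simpa using measurable_snd
    · simp only [Function.update_of_ne h]; fun_prop
  exact (hf.comp this).var ν

lemma ES_fin (ν : Measure ℝ) [IsProbabilityMeasure ν] (n : ℕ) : ∀ f : (Fin n → ℝ) → ℝ, BM f →
    VV (Measure.pi fun _ : Fin n => ν) f ≤
      ∑ i, ∫ ω, VV ν (fun t => f (Function.update ω i t)) ∂(Measure.pi fun _ : Fin n => ν) := by
  induction n with
  | zero =>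
    intro f hf
    have : f = fun _ => f 0 := by ext x; congr 1; exact Subsingleton.elim _ _
    rw [this]; simp [VV]
  | succ n ih =>
    intro f hf
    set P := Measure.pi fun _ : Fin n => ν
    have mp := (measurePreserving_piFinSuccAbove (fun _ : Fin (n+1) => ν) 0).symm
    have tr : ∀ g : (Fin (n+1) → ℝ) → ℝ, ∫ ω, g ω ∂(Measure.pi fun _ : Fin (n+1) => ν) =
        ∫ p, g (Fin.cons p.1 p.2) ∂(ν.prod P) := by
      intro g
      rw [← mp.integral_comp']
      simp [MeasurableEquiv.piFinSuccAbove, P]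
      rfl
    have mc : Measurable (fun p : ℝ × (Fin n → ℝ) => (Fin.cons p.1 p.2 : Fin (n+1) → ℝ)) := by
      rw [measurable_pi_iff]
      intro a
      refine Fin.cases ?_ (fun i => ?_) a <;> simp <;> fun_prop
    have hF : BM (fun p : ℝ × (Fin n → ℝ) => f (Fin.cons p.1 p.2)) := hf.comp mc
    have h2 := two_factor ν P hF
    have e0 : VV (Measure.pi fun _ : Fin (n+1) => ν) f =
        VV (ν.prod P) (fun p : ℝ × (Fin n → ℝ) => f (Fin.cons p.1 p.2)) := by
      rw [VV, VV, tr, tr]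
    rw [e0, Fin.sum_univ_succ]
    refine h2.trans (add_le_add (le_of_eq ?_) ?_)
    · rw [tr, integral_prod _ (((hf.upd ν 0).comp mc).integrable _)]
      simp [Fin.update_cons_zero]
    · have hi : ∀ i : Fin n, BM (fun p : ℝ × (Fin n → ℝ) =>
          VV ν fun t => f (Fin.cons p.1 (Function.update p.2 i t))) := by
        intro i
        have := (hf.upd ν i.succ).comp mc
        simpa only [← Fin.cons_update] using this
      simp only [tr, ← Fin.cons_update]
      have : ∀ i : Fin n, ∫ p, (VV ν fun t => f (Fin.cons p.1 (Function.update p.2 i t))) ∂(ν.prod P)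
          = ∫ s, ∫ ω, (VV ν fun t => f (Fin.cons s (Function.update ω i t))) ∂P ∂ν := fun i =>
        integral_prod _ ((hi i).integrable _)
      simp only [this]
      rw [← integral_finsetSum _ (fun i _ => ((hi i).int P).integrable ν)]
      refine integral_mono ((hF.var P).integrable ν)
        (integrable_finsetSum _ (fun i _ => ((hi i).int P).integrable ν)) fun s => ?_
      exact ih (fun ω => f (Fin.cons s ω)) (hF.comp (measurable_prodMk_left (x := s)))

lemma ES {E : Type*} [Fintype E] [DecidableEq E] (ν : Measure ℝ) [IsProbabilityMeasure ν]
    (f : (E → ℝ) → ℝ) (hf : BM f) :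
    VV (Measure.pi fun _ : E => ν) f ≤
      ∑ i, ∫ ω, VV ν (fun t => f (Function.update ω i t)) ∂(Measure.pi fun _ : E => ν) := by
  set φ := Fintype.equivFin E
  have mp := (measurePreserving_piCongrLeft (fun _ : Fin (Fintype.card E) => ν) φ).symm
  have tr : ∀ g : (E → ℝ) → ℝ, ∫ ω, g ω ∂(Measure.pi fun _ : E => ν) =
      ∫ p, g (p ∘ φ) ∂(Measure.pi fun _ : Fin (Fintype.card E) => ν) := by
    intro g
    rw [← mp.integral_comp']
    rfl
  have mc : Measurable (fun p : Fin (Fintype.card E) → ℝ => p ∘ φ) := by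
    rw [measurable_pi_iff]
    intro a
    simp only [Function.comp]; fun_prop
  have := ES_fin ν _ _ (hf.comp mc)
  have e0 : VV (Measure.pi fun _ : E => ν) f =
      VV (Measure.pi fun _ : Fin (Fintype.card E) => ν) (fun p => f (p ∘ φ)) := by
    rw [VV, VV, tr, tr]
  rw [e0]
  refine this.trans (le_of_eq ?_)
  rw [← φ.sum_comp]
  refine Finset.sum_congr rfl fun i _ => ?_
  rw [tr]
  simp only [Function.update_comp_equiv, Equiv.symm_apply_apply]

lemma one_dim {α β : ℝ} (ν : Measure ℝ) [IsProbabilityMeasure ν] (hν : ∀ᵐ t ∂ν, t ∈ Set.Icc α β)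
    (f : ℝ → ℝ) (hf : BM f) (S : ℝ)
    (hS : ∀ s ∈ Set.Icc α β, ∀ t ∈ Set.Icc α β, (f t - f s) ^ 2 ≤ S * (t - s) ^ 2) :
    VV ν f ≤ S * VV ν (fun t => t) := by
  have hb : ∀ᵐ t ∂ν, ‖t‖ ≤ max |α| |β| := by
    filter_upwards [hν] with t ht
    exact abs_le_max_abs_abs ht.1 ht.2
  have i1 : Integrable (fun t : ℝ => t) ν := Integrable.of_bound (by fun_prop) _ hb
  have i2 : Integrable (fun t : ℝ => t ^ 2) ν := by
    refine Integrable.of_bound (by fun_prop) ((max |α| |β|) ^ 2) ?_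
    filter_upwards [hb] with t ht
    rw [norm_pow]
    exact pow_le_pow_left₀ (norm_nonneg _) ht 2
  set m := ∫ t, t ∂ν with hm
  have hmI : m ∈ Set.Icc α β := (convex_Icc α β).integral_mem isClosed_Icc hν i1
  rw [VV_eq ν (hf.integrable ν) (hf.sq.integrable ν) (f m), VV_eq ν i1 i2 m]
  have i3 : Integrable (fun t => (t - m) ^ 2) ν := by
    have : (fun t => (t - m) ^ 2) = fun t => t ^ 2 - 2 * m * t + m ^ 2 := by ext; ring
    rw [this]
    exact (i2.sub (i1.const_mul _)).add (integrable_const _)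
  have cb : BM (fun _ : ℝ => f m) := ⟨measurable_const, |f m|, fun _ => le_rfl⟩
  have : ∫ t, (f t - f m) ^ 2 ∂ν ≤ ∫ t, S * (t - m) ^ 2 ∂ν := by
    refine integral_mono_ae ((hf.sub cb).sq.integrable ν) (i3.const_mul _) ?_
    filter_upwards [hν] with t ht using hS m hmI t ht
  rw [integral_const_mul] at this
  rw [← hm, sub_self]
  nlinarith [sq_nonneg (∫ x, f x ∂ν - f m)]

lemma lip {E : Type*} [Fintype E] [DecidableEq E] {α β : ℝ} (X : (E → ℝ) → ℝ)
    (hX : ContDiff ℝ 1 X) (ω : E → ℝ) (e : E) (s t : ℝ) (hs : s ∈ Set.Icc α β)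
    (ht : t ∈ Set.Icc α β) :
    (X (Function.update ω e t) - X (Function.update ω e s)) ^ 2 ≤
      (⨆ t : Set.Icc α β,
            (fderiv ℝ X (Function.update ω e (t : ℝ)) (Pi.single e 1)) ^ 2) * (t - s) ^ 2 := by
  have hc : Continuous fun t : ℝ => (fderiv ℝ X (Function.update ω e t) (Pi.single e 1)) ^ 2 := by
    have h1 := hX.continuous_fderiv one_ne_zero
    have h2 : Continuous fun t : ℝ => Function.update ω e t := by fun_prop
    exact ((h1.comp h2).clm_apply continuous_const).pow 2
  have hbdd : BddAbove (Set.range fun t : Set.Icc α β =>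
      (fderiv ℝ X (Function.update ω e (t : ℝ)) (Pi.single e 1)) ^ 2) :=
    (isCompact_range (hc.comp continuous_subtype_val)).bddAbove
  set S := ⨆ t : Set.Icc α β,
            (fderiv ℝ X (Function.update ω e (t : ℝ)) (Pi.single e 1)) ^ 2
  have hS : ∀ t ∈ Set.Icc α β, (fderiv ℝ X (Function.update ω e t) (Pi.single e 1)) ^ 2 ≤ S :=
    fun t ht => le_ciSup hbdd ⟨t, ht⟩
  have hd : ∀ t : ℝ, HasDerivAt (fun t => X (Function.update ω e t))
      (fderiv ℝ X (Function.update ω e t) (Pi.single e 1)) t := fun t =>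
    ((hX.differentiable one_ne_zero _).hasFDerivAt).comp_hasDerivAt t (hasDerivAt_update ω e t)
  have hS0 : 0 ≤ S := (sq_nonneg _).trans (hS s hs)
  have := (convex_Icc α β).norm_image_sub_le_of_norm_hasDerivWithin_le (C := √S)
    (fun t _ => (hd t).hasDerivWithinAt)
    (fun t ht => by rw [Real.norm_eq_abs]; exact Real.abs_le_sqrt (hS t ht)) hs ht
  have h2 := pow_le_pow_left₀ (norm_nonneg _) this 2
  rw [mul_pow, Real.sq_sqrt hS0] at h2
  simpa using h2

theorem statement18 {E : Type*} [Fintype E] [Nonempty E] [DecidableEq E]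
    {α β : ℝ} (hα : 0 < α) (hαβ : α ≤ β)
    (ν : Measure ℝ) [IsProbabilityMeasure ν] (hν : ν (Set.Icc α β) = 1)
    (X : (E → ℝ) → ℝ) (hX : ContDiff ℝ 1 X) :
    ENNReal.ofReal (ProbabilityTheory.variance X (Measure.pi fun _ : E => ν)) ≤
      (∑ e : E, ∫⁻ ω, ENNReal.ofReal
          (⨆ t : Set.Icc α β,
            (fderiv ℝ X (Function.update ω e (t : ℝ)) (Pi.single e 1)) ^ 2)
          ∂(Measure.pi fun _ : E => ν))
        * ENNReal.ofReal ((∫ t, t ^ 2 ∂ν) - (∫ t, t ∂ν) ^ 2) := by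
  have hν' : ∀ᵐ t ∂ν, t ∈ Set.Icc α β := (prob_compl_eq_zero_iff measurableSet_Icc).2 hν
  have hP : ∀ᵐ ω ∂(Measure.pi fun _ : E => ν), ∀ e, ω e ∈ Set.Icc α β := by
    rw [ae_all_iff]
    intro e
    exact (measurePreserving_eval (fun _ : E => ν) e).quasiMeasurePreserving.ae hν'
  set cl : (E → ℝ) → (E → ℝ) := fun ω e => max α (min β (ω e)) with hcl
  have clc : Continuous cl := by fun_prop
  have clI : ∀ ω, (∀ e, ω e ∈ Set.Icc α β) → cl ω = ω := by
    intro ω h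
    ext e
    simp [hcl, (h e).1, (h e).2]
  have hY : BM (fun ω => X (cl ω)) := by
    refine ⟨(hX.continuous.comp clc).measurable, ?_⟩
    obtain ⟨C, hC⟩ := (isCompact_univ_pi fun _ : E => isCompact_Icc (a := α) (b := β)).exists_bound_of_continuousOn
      hX.continuous.continuousOn
    exact ⟨C, fun ω => hC _ fun e _ => ⟨le_max_left _ _, max_le hαβ (min_le_left _ _)⟩⟩
  have hXY : X =ᵐ[Measure.pi fun _ : E => ν] fun ω => X (cl ω) := by
    filter_upwards [hP] with ω h
    rw [clI ω h]
  have hvar : ProbabilityTheory.variance X (Measure.pi fun _ : E => ν) =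
      VV (Measure.pi fun _ : E => ν) (fun ω => X (cl ω)) := by
    rw [ProbabilityTheory.variance_congr hXY, ProbabilityTheory.variance_eq_sub]
    · rfl
    · exact (memLp_two_iff_integrable_sq hY.1.aestronglyMeasurable).2 (hY.sq.integrable _)
  have hpos : ∀ e, ∀ ω, 0 ≤ VV ν (fun t => X (cl (Function.update ω e t))) := by
    intro e ω
    have hb : BM (fun t => X (cl (Function.update ω e t))) :=
      hY.comp (measurable_update ω)
    rw [VV_eq ν (hb.integrable ν) (hb.sq.integrable ν) (∫ t, X (cl (Function.update ω e t)) ∂ν)]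
    simp only [sub_self]
    have : 0 ≤ ∫ x, (X (cl (Function.update ω e x)) - ∫ t, X (cl (Function.update ω e t)) ∂ν) ^ 2 ∂ν :=
      integral_nonneg fun _ => sq_nonneg _
    simpa using this
  rw [hvar]
  refine (ENNReal.ofReal_le_ofReal (ES ν _ hY)).trans ?_
  rw [ENNReal.ofReal_sum_of_nonneg fun e _ => integral_nonneg (hpos e), Finset.sum_mul]
  refine Finset.sum_le_sum fun e _ => ?_
  rw [ofReal_integral_eq_lintegral_ofReal ((hY.upd ν e).integrable _)
    (Filter.Eventually.of_forall (hpos e)), ← lintegral_mul_const' _ _ ENNReal.ofReal_ne_top]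
  refine lintegral_mono_ae ?_
  filter_upwards [hP] with ω hω
  rw [← ENNReal.ofReal_mul (Real.iSup_nonneg fun _ => sq_nonneg _)]
  refine ENNReal.ofReal_le_ofReal ?_
  have hu : ∀ t ∈ Set.Icc α β, cl (Function.update ω e t) = Function.update ω e t := by
    intro t ht
    refine clI _ fun e' => ?_
    by_cases h : e' = e
    · subst h; simpa using ht
    · simpa [Function.update_of_ne h] using hω e'
  refine one_dim ν hν' _ (hY.comp (measurable_update ω)) _ fun s hs t ht => ?_
  rw [hu s hs, hu t ht]
  exact lip X hX ω e s t hs ht
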